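/- Let X be a metric space with metric d, T : X → X a continuous map, and u ∈ X a point whose orbit {T^n u : n ≥ 0} has compact closure. Assume every point of the ω-limit set ω(u) belongs to the Fatou set of T, i.e. for every y ∈ ω(u), the family of iterates {T^n : n ≥ 1} is equicontinuous at y: for every ε > 0 there exists δ > 0 such that d(x, y) < δ implies d(T^n x, T^n y) < ε for all n ≥ 1. Then for every y ∈ ω(u), the ω-limit set ω(y) equals ω(u); i.e. (ω(u), T restricted to ω(u)) is a minimal dynamical system. -/

import Mathlib

open Filter Topology

/-- The ω-limit set of `u` under `T`: all limits of convergent subsequences of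
the orbit sequence `(T^[n] u)`. -/
def omegaLimitSet {X : Type*} [MetricSpace X] (T : X → X) (u : X) : Set X :=
  {x | ∃ φ : ℕ → ℕ, StrictMono φ ∧ Tendsto (fun n => T^[φ n] u) atTop (𝓝 x)}

/-!
The closed set `ω(u)` contains the orbit of `y`, because the iterates of `T` are continuous at `y`;
hence `ω(y) ⊆ ω(u)`. Conversely, let `z ∈ ω(u)`. The orbit of `u` enters every neighbourhood of `y`,
at some `T^[m] u` say, and a tail of an orbit has the same ω-limit set as the orbit, so
`z ∈ ω(T^[m] u)`. By equicontinuity at `y` the orbit of `y` shadows that of `T^[m] u` for all times,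
so it too accumulates at `z`.
-/

open scoped omegaLimit

section EquicontinuousFamily

variable {ι X α : Type*} [TopologicalSpace X] [UniformSpace α] {l : Filter ι} {F : ι → X → α}
  {y : X} {z : α}

theorem mem_omegaLimit_singleton_of_equicontinuousAt (hF : EquicontinuousAt F y)
    (hz : ∃ᶠ x in 𝓝 y, z ∈ ω l F {x}) : z ∈ ω l F {y} := by
  rw [mem_omegaLimit_singleton_iff_mapClusterPt,
    (UniformSpace.hasBasis_nhds z).mapClusterPt_iff_frequently]
  rintro U ⟨hU, -⟩
  obtain ⟨V, hV, hVU⟩ := comp_mem_uniformity_sets hU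
  obtain ⟨x, hzx, hyx⟩ := (hz.and_eventually (hF _ (symm_le_uniformity hV))).exists
  rw [mem_omegaLimit_singleton_iff_mapClusterPt] at hzx
  have hxz : ∃ᶠ i in l, (z, F i x) ∈ V := hzx.frequently (mem_nhds_left z hV)
  exact hxz.mono fun i hi ↦ hVU ⟨F i x, hi, hyx i⟩

end EquicontinuousFamily

section Iterates

variable {X : Type*} [TopologicalSpace X] {T : X → X} {u y : X}

theorem omegaLimit_iterate_apply (T : X → X) (m : ℕ) (u : X) :
    ω⁺ (Nat.iterate T) {T^[m] u} = ω⁺ (Nat.iterate T) {u} := by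
  ext z
  simp only [mem_omegaLimit_singleton_iff_mapClusterPt, ← Function.iterate_add_apply]
  rw [← Function.comp_def (fun n ↦ T^[n] u) (· + m), mapClusterPt_comp, map_add_atTop_eq_nat]

theorem iterate_mem_omegaLimit (hy : y ∈ ω⁺ (Nat.iterate T) {u}) {n : ℕ}
    (hT : ContinuousAt T^[n] y) : T^[n] y ∈ ω⁺ (Nat.iterate T) {u} := by
  rw [← omegaLimit_iterate_apply T n u]
  rw [mem_omegaLimit_singleton_iff_mapClusterPt] at hy ⊢
  simpa only [Function.comp_def, ← Function.iterate_add_apply, add_comm n]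
    using hy.continuousAt_comp hT

theorem omegaLimit_subset_of_continuousAt_iterate (hy : y ∈ ω⁺ (Nat.iterate T) {u})
    (hT : ∀ n, ContinuousAt T^[n] y) : ω⁺ (Nat.iterate T) {y} ⊆ ω⁺ (Nat.iterate T) {u} :=
  fun _ hz ↦ (isClosed_omegaLimit _ _ _).mem_of_mapClusterPt
    ((mem_omegaLimit_singleton_iff_mapClusterPt ..).1 hz)
    (.of_forall fun n ↦ iterate_mem_omegaLimit hy (hT n))

end Iterates

/-- The Fatou set of `T`: the points at which the iterates of `T` are equicontinuous. The family
includes `T^[0] = id`, which does not affect equicontinuity. -/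
def fatouSet {X : Type*} [UniformSpace X] (T : X → X) : Set X :=
  {x | EquicontinuousAt (Nat.iterate T) x}

theorem mem_fatouSet_iff_dist {X : Type*} [PseudoMetricSpace X] {T : X → X} {y : X} :
    y ∈ fatouSet T ↔ ∀ ε > (0 : ℝ), ∃ δ > (0 : ℝ), ∀ x : X,
      dist x y < δ → ∀ n : ℕ, 1 ≤ n → dist (T^[n] x) (T^[n] y) < ε := by
  simp only [fatouSet, Set.mem_ofPred_eq, Metric.equicontinuousAt_iff, dist_comm (T^[_] y)]
  refine forall₂_congr fun ε hε ↦ ⟨?_, ?_⟩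
  · rintro ⟨δ, hδ, h⟩
    exact ⟨δ, hδ, fun x hx n _ ↦ h x hx n⟩
  · rintro ⟨δ, hδ, h⟩
    refine ⟨min δ ε, lt_min hδ hε, fun x hx n ↦ ?_⟩
    obtain ⟨hxδ, hxε⟩ := lt_min_iff.1 hx
    rcases n.eq_zero_or_pos with rfl | hn
    · exact hxε
    · exact h x hxδ n hn

theorem omegaLimitSet_eq_omegaLimit {X : Type*} [MetricSpace X] (T : X → X) (u : X) :
    omegaLimitSet T u = ω⁺ (Nat.iterate T) {u} := by
  ext z
  rw [mem_omegaLimit_singleton_iff_mapClusterPt]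
  constructor
  · rintro ⟨φ, hφ, hlim⟩
    exact .of_comp hφ.tendsto_atTop hlim.mapClusterPt
  · exact fun hz ↦ hz.tendsto_subseq

theorem omegaLimitSet_in_Fatou_minimal_general {X : Type*} [UniformSpace X] {T : X → X} {u y : X}
    (hy : y ∈ ω⁺ (Nat.iterate T) {u}) (hfatou : y ∈ fatouSet T) :
    ω⁺ (Nat.iterate T) {y} = ω⁺ (Nat.iterate T) {u} := by
  refine (omegaLimit_subset_of_continuousAt_iterate hy hfatou.continuousAt).antisymm fun z hz ↦ ?_
  have hz_iterate (m : ℕ) : z ∈ ω⁺ (Nat.iterate T) {T^[m] u} :=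
    (omegaLimit_iterate_apply T m u).symm ▸ hz
  rw [mem_omegaLimit_singleton_iff_mapClusterPt] at hy
  have hz_near : ∃ᶠ x in 𝓝 y, z ∈ ω⁺ (Nat.iterate T) {x} :=
    hy.clusterPt.frequently' (eventually_map.2 <| .of_forall hz_iterate)
  exact mem_omegaLimit_singleton_of_equicontinuousAt hfatou hz_near

/-- If `ω(u)` is contained in the Fatou set of `T` (the iterates are
equicontinuous at each point of `ω(u)`), then `(ω(u), T)` is a minimal
dynamical system: `ω(y) = ω(u)` for every `y ∈ ω(u)`. -/
theorem omegaLimitSet_in_Fatou_minimal {X : Type*} [MetricSpace X]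
    (T : X → X) (hT : Continuous T) (u : X)
    (hc : IsCompact (closure (Set.range fun n => T^[n] u)))
    (hfatou : ∀ y ∈ omegaLimitSet T u, ∀ ε > (0 : ℝ), ∃ δ > (0 : ℝ), ∀ x : X,
      dist x y < δ → ∀ n : ℕ, 1 ≤ n → dist (T^[n] x) (T^[n] y) < ε) :
    ∀ y ∈ omegaLimitSet T u, omegaLimitSet T y = omegaLimitSet T u := by
  intro y hy
  have hy_fatou : y ∈ fatouSet T := mem_fatouSet_iff_dist.2 (hfatou y hy)
  rw [omegaLimitSet_eq_omegaLimit] at hy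
  simpa only [omegaLimitSet_eq_omegaLimit] using omegaLimitSet_in_Fatou_minimal_general hy hy_fatou
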